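/- arXiv:2105.00018 — 2 statements merged into one kernel-verified Lean document; each statement's English description precedes it below -/
import Mathlib

section
/- Let μ be the pushforward of ν under x ↦ log(1 + e^x), i.e. the invariant measure of the chain Ỹ_{n+1} = log(1 + exp(𝚣_{n+1} + Ỹ_n)), and let μ̂(u) := ∫ e^{−ux} μ(dx) be its Laplace transform, finite for Re u large. Then μ̂(u) is finite exactly for Re u > 0, and there exist m_ζ > 0, c_ζ ∈ ℝ, ρ ∈ (0,1] and a function H analytic on {u ∈ ℂ : Re u > −ρ} such that μ̂(u) = m_ζ/u + c_ζ + u H(u) for Re u > 0; in particular μ̂ extends meromorphically to {Re u > −ρ} with a simple pole at u = 0 as its only singularity there. -/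
open MeasureTheory ProbabilityTheory Real Filter Set
open scoped ENNReal

noncomputable def hkfun (k x : ℝ) : ℝ :=
  Real.log ((Real.exp (-k) + Real.exp x) / (1 + Real.exp (x - k)))

noncomputable def hY (y : ℝ) : ℝ := y + Real.log (1 + Real.exp (-y))

/-- A σ-finite measure ν is invariant for the chain Y_{n+1} = z_{n+1} + hY (Y_n),
where the increments have density ζ. -/
def IsInvariantY (ζ : ℝ → ℝ) (ν : Measure ℝ) : Prop :=
  ∀ g : ℝ → ℝ≥0∞, Measurable g →
    ∫⁻ z, g z ∂ν = ∫⁻ y, ∫⁻ z, g (z + hY y) * ENNReal.ofReal (ζ z) ∂volume ∂ν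

lemma hY_eq (y : ℝ) : hY y = Real.log (1 + Real.exp y) := by
  unfold hY
  have h1 : (1 + Real.exp y) = Real.exp y * (1 + Real.exp (-y)) := by
    rw [mul_add, ← Real.exp_add]; simp [add_comm]
  rw [h1, Real.log_mul (by positivity) (by positivity), Real.log_exp]

lemma hY_exp (y : ℝ) : Real.exp (hY y) = 1 + Real.exp y := by
  rw [hY_eq, Real.exp_log (by positivity)]

lemma hY_pos (y : ℝ) : 0 < hY y := by
  rw [hY_eq]; exact Real.log_pos (by linarith [Real.exp_pos y])

lemma hY_gt (y : ℝ) : y < hY y := by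
  rw [← Real.exp_lt_exp, hY_exp]; linarith

lemma hY_le (y : ℝ) : hY y ≤ y + Real.exp (-y) := by
  unfold hY
  have := Real.log_le_sub_one_of_pos (x := 1 + Real.exp (-y)) (by positivity)
  linarith

lemma hY_le' (y : ℝ) : hY y ≤ Real.exp y := by
  rw [hY_eq]
  have := Real.log_le_sub_one_of_pos (x := 1 + Real.exp y) (by positivity)
  linarith

lemma hY_strictMono : StrictMono hY := by
  intro a b hab
  rw [← Real.exp_lt_exp, hY_exp, hY_exp]
  have := Real.exp_lt_exp.2 hab
  linarith

lemma hY_cont : Continuous hY := by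
  have : hY = fun y => Real.log (1 + Real.exp y) := funext hY_eq
  rw [this]
  exact Continuous.log (by fun_prop) (fun x => by positivity)

lemma hY_bound (y : ℝ) : hY y ≤ max y 0 + 2 * Real.exp (- hY y) := by
  rw [Real.exp_neg, hY_exp]
  rcases le_total y 0 with h | h
  · rw [max_eq_right h]
    have h1 : Real.exp y ≤ 1 := Real.exp_le_one_iff.2 h
    have h2 := hY_le' y
    have h3 : 1 ≤ 2 * (1 + Real.exp y)⁻¹ := by
      rw [← div_eq_mul_inv, le_div_iff₀ (by positivity)]; linarith
    linarith
  · rw [max_eq_left h]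
    have h1 : 1 ≤ Real.exp y := Real.one_le_exp h
    have h2 := hY_le y
    have h3 : Real.exp (-y) ≤ 2 * (1 + Real.exp y)⁻¹ := by
      rw [Real.exp_neg, ← div_eq_mul_inv, le_div_iff₀ (by positivity), inv_mul_le_iff₀ (by positivity)]
      linarith
    linarith

/-- differentiation under the integral -/
lemma aux_hol {μ : Measure ℝ} {U : Set ℂ} (hU : IsOpen U) (F : ℝ → ℂ → ℂ) (b : ℝ → ℝ)
    (hb : Integrable b μ) (hc : Continuous (Function.uncurry F))
    (hd : ∀ y, Differentiable ℂ (F y))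
    (hbd : ∀ᵐ y ∂μ, ∀ u ∈ U, ‖F y u‖ ≤ b y) :
    DifferentiableOn ℂ (fun u => ∫ y, F y u ∂μ) U := by
  intro u hu
  obtain ⟨r, hr, hball⟩ := Metric.isOpen_iff.1 hU u hu
  have hmeas : ∀ u, AEStronglyMeasurable (fun y => F y u) μ := fun u =>
    (hc.comp (by fun_prop : Continuous fun y : ℝ => (y, u))).aestronglyMeasurable
  have key := hasDerivAt_integral_of_dominated_loc_of_deriv_le (μ := μ) (F := fun u y => F y u)
    (x₀ := u) (s := Metric.ball u (r/2)) (bound := fun y => b y / (r/3))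
    (F' := fun u y => deriv (F y) u)
    (Metric.ball_mem_nhds _ (by positivity)) (Eventually.of_forall hmeas)
    (hb.mono' (hmeas u) (hbd.mono fun y hy => hy u hu))
    (((measurable_deriv_with_param hc).comp
      (by fun_prop : Measurable fun y : ℝ => (y, u))).aestronglyMeasurable)
    (by
      filter_upwards [hbd] with y hy v hv
      refine Complex.norm_deriv_le_of_forall_mem_sphere_norm_le (by positivity)
        (hd y).diffContOnCl ?_
      intro z hz
      refine hy z (hball ?_)
      rw [Metric.mem_ball] at hv ⊢
      rw [Metric.mem_sphere] at hz
      have := dist_triangle z v u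
      linarith)
    (hb.div_const _)
    (by
      filter_upwards with y v hv
      exact (hd y v).hasDerivAt)
  exact key.2.differentiableAt.differentiableWithinAt
lemma aux_expmom (ζ : ℝ → ℝ) (hζnn : ∀ x, 0 ≤ ζ x)
    (hζi : Integrable ζ) (δ : ℝ) (Cδ : ℝ)
    (htail : ∀ x : ℝ, 0 ≤ x → ∫ y in {y : ℝ | x < |y|}, ζ y ≤ Cδ * Real.exp (-δ * x))
    (P : Measure ℝ) [IsProbabilityMeasure P]
    (hP : P = volume.withDensity (fun x => ENNReal.ofReal (ζ x)))
    (s : ℝ) (hs0 : 0 < s) (hs : s < δ) :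
    Integrable (fun z => Real.exp (s * |z|)) P := by
  have hPt : ∀ n : ℕ, P {y : ℝ | (n:ℝ) < |y|} ≤ ENNReal.ofReal (Cδ * Real.exp (-δ * n)) := by
    intro n
    have hm : MeasurableSet {y : ℝ | (n:ℝ) < |y|} := measurableSet_lt (by fun_prop) (by fun_prop)
    rw [hP, withDensity_apply _ hm, ← ofReal_integral_eq_lintegral_ofReal hζi.integrableOn
      (Eventually.of_forall hζnn)]
    exact ENNReal.ofReal_le_ofReal (htail n (by positivity))
  refine ⟨by fun_prop, ?_⟩
  rw [hasFiniteIntegral_iff_ofReal (Eventually.of_forall fun z => (Real.exp_pos _).le)]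
  have hle : ∀ z : ℝ, ENNReal.ofReal (Real.exp (s * |z|)) ≤ 1 + ∑' n : ℕ,
      ENNReal.ofReal (Real.exp (s * (n+1))) * ({y : ℝ | (n:ℝ) < |y|}.indicator (fun _ => 1) z) := by
    intro z
    rcases eq_or_ne z 0 with rfl | hz
    · simp
    have hz' : 0 < |z| := abs_pos.2 hz
    obtain ⟨n, hn⟩ : ∃ n : ℕ, ⌈|z|⌉₊ = n + 1 :=
      Nat.exists_eq_succ_of_ne_zero (Nat.ceil_pos.2 hz').ne'
    have h1 : |z| ≤ n + 1 := by have := Nat.le_ceil |z|; rw [hn] at this; exact_mod_cast this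
    have h2 : (n:ℝ) < |z| := Nat.lt_ceil.1 (by omega)
    refine le_trans ?_ (le_trans (ENNReal.le_tsum n) le_add_self)
    rw [indicator_of_mem (by exact h2), mul_one]
    exact ENNReal.ofReal_le_ofReal (Real.exp_le_exp.2 (by gcongr))
  have hm : ∀ n : ℕ, MeasurableSet {y : ℝ | (n:ℝ) < |y|} := fun n =>
    measurableSet_lt (by fun_prop) (by fun_prop)
  refine lt_of_le_of_lt (lintegral_mono hle) ?_
  rw [lintegral_add_left measurable_const, lintegral_tsum (fun n =>
    ((measurable_const.indicator (hm n)).const_mul _).aemeasurable)]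
  refine ENNReal.add_lt_top.2 ⟨by simp, ?_⟩
  have hsum : Summable (fun n : ℕ => Real.exp (s * (n+1)) * (Cδ * Real.exp (-δ * n))) := by
    have : (fun n : ℕ => Real.exp (s * (n+1)) * (Cδ * Real.exp (-δ * n)))
        = fun n : ℕ => (Real.exp s * Cδ) * (Real.exp (s - δ)) ^ n := by
      ext n
      rw [← Real.exp_nat_mul, show s * ((n:ℝ)+1) = s + s * n by ring, Real.exp_add,
        show (n:ℝ) * (s - δ) = s * n + -δ * n by ring, Real.exp_add]
      ring
    rw [this]
    exact (summable_geometric_of_lt_one (Real.exp_pos _).le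
      (Real.exp_lt_one_iff.2 (by linarith))).mul_left _
  refine lt_of_le_of_lt (ENNReal.tsum_le_tsum (fun n => ?_)) (lt_top_iff_ne_top.2 hsum.tsum_ofReal_ne_top)
  rw [lintegral_const_mul _ (measurable_const.indicator (hm n)), lintegral_indicator (hm n),
    ENNReal.ofReal_mul (Real.exp_pos _).le]
  gcongr
  simpa using hPt n

lemma aux_neg (P : Measure ℝ) [IsProbabilityMeasure P] [NullSingletonClass P]
    (hi : Integrable (fun z : ℝ => z) P) (hmean : ∫ z, z ∂P = 0) :
    ∃ a > 0, 0 < P (Iio (-(2 * a))) := by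
  by_contra hcon
  push Not at hcon
  have h0 : P (Iio 0) = 0 := by
    have : Iio (0:ℝ) = ⋃ n : ℕ, Iio (-(2 * (1 / ((n:ℝ)+1)))) := by
      ext x
      simp only [mem_Iio, mem_iUnion]
      constructor
      · intro hx
        obtain ⟨n, hn⟩ := exists_nat_one_div_lt (show 0 < -x/2 by linarith)
        exact ⟨n, by linarith⟩
      · rintro ⟨n, hn⟩
        have : (0:ℝ) < 1 / ((n:ℝ)+1) := by positivity
        linarith
    rw [this]
    exact measure_iUnion_null (fun n => le_antisymm (hcon _ (by positivity)) bot_le)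
  have hnn : 0 ≤ᵐ[P] fun z : ℝ => z := by
    rw [Filter.EventuallyLE, ae_iff]
    simpa [Iio] using h0
  have := (integral_eq_zero_iff_of_nonneg_ae hnn hi).1 hmean
  have h2 : P {0}ᶜ = 0 := by
    have h3 := ae_iff.1 this
    simpa [compl_def] using h3
  have h4 : P univ ≤ P {0} + P {0}ᶜ := by
    rw [← union_compl_self ({0} : Set ℝ)]; exact measure_union_le _ _
  simp [h2] at h4
lemma aux_growth (P : Measure ℝ) [IsProbabilityMeasure P] (ν : Measure ℝ)
    (hinv : ∀ g : ℝ → ℝ≥0∞, Measurable g →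
      ∫⁻ z, g z ∂ν = ∫⁻ y, ∫⁻ z, g (z + hY y) ∂P ∂ν)
    (hfin : ∀ x : ℝ, ν (Set.Iic x) < ⊤)
    (hi : Integrable (fun z : ℝ => z) P) (hmean : ∫ z, z ∂P = 0)
    (s : ℝ) (hs : 0 < s) (hs1 : s ≤ 1)
    (hes : Integrable (fun z => Real.exp (-(s * z))) P)
    (a : ℝ) (ha : 0 < a) (L : ℝ) (hL : a ≤ L) :
    ENNReal.ofReal a * P (Iio (-(2 * a))) * ν {y | L ≤ hY y ∧ hY y ≤ L + a} ≤
      ENNReal.ofReal (2 + (∫ z, Real.exp (-(s * z)) ∂P) / s) *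
        ∫⁻ y in Iio L, ENNReal.ofReal (Real.exp (-(s * hY y))) ∂ν := by
  have hL0 : 0 < L := ha.trans_le hL
  have hYm : Measurable hY := hY_cont.measurable
  set E := ∫ z, Real.exp (-(s * z)) ∂P with hE
  have hE0 : 0 ≤ E := integral_nonneg fun z => (Real.exp_pos _).le
  set gr : ℝ → ℝ := fun y => min (max (L - y) 0) L with hgr
  have hgm : Measurable gr := by fun_prop
  have hgc : Continuous gr := by fun_prop
  have hg0 : ∀ y, 0 ≤ gr y := fun y => le_min (le_max_right _ _) hL0.le
  have hgL : ∀ y, gr y ≤ L := fun y => min_le_right _ _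
  have hgz : ∀ y, L ≤ y → gr y = 0 := fun y hy => by
    simp only [hgr]; rw [max_eq_right (by linarith), min_eq_left hL0.le]
  set W : Set ℝ := {y | L ≤ hY y ∧ hY y ≤ L + a} with hW
  have hWm : MeasurableSet W := (measurableSet_le measurable_const hYm).inter
    (measurableSet_le hYm measurable_const)
  set f : ℝ → ℝ≥0∞ := fun y => ENNReal.ofReal (Real.exp (-(s * hY y))) with hf
  have hfm : Measurable f := by fun_prop
  set I := ∫⁻ y in Iio L, f y ∂ν with hI
  set κ := ENNReal.ofReal a * P (Iio (-(2 * a))) with hκ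
  -- pointwise 1
  have p1 : ∀ y, ENNReal.ofReal (gr y) ≤ ENNReal.ofReal (gr (hY y)) +
      (Iio L).indicator (fun y => ENNReal.ofReal 2 * f y) y := by
    intro y
    by_cases hy : y < L
    · rw [indicator_of_mem (by exact hy), hf]
      simp only
      rw [← ENNReal.ofReal_mul (by norm_num), ← ENNReal.ofReal_add (hg0 _) (by positivity)]
      apply ENNReal.ofReal_le_ofReal
      have h1 := hY_bound y
      have h2 := hY_pos y
      have h3 : Real.exp (-hY y) ≤ Real.exp (-(s * hY y)) := Real.exp_le_exp.2 (by nlinarith)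
      have h4 : L - hY y ≤ gr (hY y) := le_min (le_max_left _ _) (by linarith)
      have h5 : gr y ≤ L - max y 0 := by
        rcases le_total y 0 with h | h
        · rw [max_eq_right h]; have := hgL y; linarith
        · rw [max_eq_left h]
          refine (min_le_left _ _).trans (max_le le_rfl (by linarith))
      linarith
    · rw [hgz y (not_lt.1 hy)]; simp
  -- pointwise 2
  have p2 : ∀ y, ENNReal.ofReal (gr (hY y)) + W.indicator (fun _ => κ) y ≤
      ∫⁻ z, ENNReal.ofReal (gr (z + hY y)) ∂P +
      (Iio L).indicator (fun y => ENNReal.ofReal (E / s) * f y) y := by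
    intro y
    set w := hY y with hw
    by_cases hwL : L ≤ w
    · rw [hgz _ hwL]
      by_cases hyW : y ∈ W
      · rw [indicator_of_mem hyW]
        refine le_trans ?_ le_self_add
        simp only [ENNReal.ofReal_zero, zero_add]
        calc κ = ∫⁻ z in Iio (-(2 * a)), ENNReal.ofReal a ∂P := by simp [hκ]
          _ ≤ ∫⁻ z in Iio (-(2 * a)), ENNReal.ofReal (gr (z + w)) ∂P := by
              refine setLIntegral_mono (by fun_prop) fun z hz => ENNReal.ofReal_le_ofReal ?_
              have h1 : w ≤ L + a := hyW.2
              have h2 : z < -(2 * a) := hz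
              exact le_min (le_max_of_le_left (by linarith)) hL
          _ ≤ _ := setLIntegral_le_lintegral _ _
      · rw [indicator_of_notMem hyW]; simp
    · push Not at hwL
      have hyL : y < L := (hY_gt y).trans hwL
      have hyW : y ∉ W := fun h => absurd h.1 (not_le.2 hwL)
      rw [indicator_of_notMem hyW, indicator_of_mem (by exact hyL), hf, add_zero]
      simp only
      have hw0 : 0 < w := hY_pos y
      have hgi : Integrable (fun z => gr (z + w)) P :=
        Integrable.of_bound (by fun_prop) L (Eventually.of_forall fun z => by
          rw [Real.norm_of_nonneg (hg0 _)]; exact hgL _)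
      rw [← ENNReal.ofReal_mul (by positivity), ← ofReal_integral_eq_lintegral_ofReal hgi
        (Eventually.of_forall fun z => hg0 _), ← ENNReal.ofReal_add
        (integral_nonneg fun z => hg0 _) (by positivity)]
      apply ENNReal.ofReal_le_ofReal
      have h1 : gr w ≤ L - w := by
        refine (min_le_left _ _).trans (max_le le_rfl (by linarith))
      have hes2 : Integrable (fun z => Real.exp (-(s * z)) * (Real.exp (-(s * w)) / s)) P :=
        hes.mul_const _
      have h2 : ∫ z, ((L - w) - z) ∂P ≤ ∫ z, (gr (z + w) +
          Real.exp (-(s * z)) * (Real.exp (-(s * w)) / s)) ∂P := by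
        refine integral_mono ((integrable_const _).sub hi) (hgi.add hes2) fun z => ?_
        simp only
        have h3 : Real.exp (-(s * z)) * (Real.exp (-(s * w)) / s) = Real.exp (-(s * (z + w))) / s := by
          rw [mul_div_assoc', ← Real.exp_add]; congr 2; ring
        rw [h3]
        have h4 : -(z + w) ≤ Real.exp (-(s * (z + w))) / s := by
          rw [le_div_iff₀ hs]
          have := Real.add_one_le_exp (-(s * (z+w)))
          nlinarith
        have h5 : 0 ≤ Real.exp (-(s * (z + w))) / s := by positivity
        rcases le_total (z + w) 0 with h | h
        · have : gr (z + w) = L := min_eq_right (le_max_of_le_left (by linarith))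
          linarith
        · have : L - (z + w) ≤ gr (z + w) := le_min (le_max_left _ _) (by linarith)
          linarith
      rw [integral_sub (integrable_const _) hi, integral_add hgi hes2, hmean,
        integral_mul_const] at h2
      simp only [integral_const, probReal_univ, one_smul, sub_zero] at h2
      rw [← hE] at h2
      have : E * (Real.exp (-(s * w)) / s) = E / s * Real.exp (-(s * w)) := by ring
      linarith
  have q1 := lintegral_mono (μ := ν) p1
  have q2 := lintegral_mono (μ := ν) p2
  have hind : ∀ c : ℝ≥0∞, ∫⁻ y, (Iio L).indicator (fun y => c * f y) y ∂ν = c * I := by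
    intro c
    rw [lintegral_indicator measurableSet_Iio, lintegral_const_mul _ hfm]
  have hgm2 : Measurable fun y => ENNReal.ofReal (gr y) := hgm.ennreal_ofReal
  have hgm3 : Measurable fun y => ENNReal.ofReal (gr (hY y)) := hgm2.comp hYm
  rw [lintegral_add_left hgm3, hind] at q1
  rw [lintegral_add_left hgm3, lintegral_add_right _ ((hfm.const_mul _).indicator measurableSet_Iio),
    hind, ← hinv _ hgm2, lintegral_indicator hWm, lintegral_const, Measure.restrict_apply_univ] at q2
  have hfinG : ∫⁻ y, ENNReal.ofReal (gr (hY y)) ∂ν ≠ ⊤ := by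
    refine ne_of_lt (lt_of_le_of_lt (b := ∫⁻ y, (Iic L).indicator (fun _ => ENNReal.ofReal L) y ∂ν)
      (lintegral_mono fun y => ?_) ?_)
    · by_cases hy : y ≤ L
      · rw [indicator_of_mem (by exact hy)]; exact ENNReal.ofReal_le_ofReal (hgL _)
      · rw [hgz _ ((not_le.1 hy).trans (hY_gt y)).le]; simp
    · rw [lintegral_indicator measurableSet_Iic, lintegral_const, Measure.restrict_apply_univ]
      exact ENNReal.mul_lt_top ENNReal.ofReal_lt_top (hfin L)
  rw [ENNReal.ofReal_add (by norm_num) (by positivity), add_mul]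
  have q3 := q2.trans (add_le_add_left q1 _)
  rw [add_assoc] at q3
  exact (ENNReal.add_le_add_iff_left hfinG).1 q3

lemma aux_gron (S : ℕ → ℝ≥0∞) (K r : ℝ) (hK : 0 ≤ K) (hr : 0 < r) (hr1 : r < 1)
    (h : ∀ n, S (n+1) ≤ S n + ENNReal.ofReal (K * r ^ n) * S n) (n : ℕ) :
    S n ≤ S 0 * ENNReal.ofReal (Real.exp (K / (1 - r))) := by
  have h1 : ∀ n, S n ≤ S 0 * ENNReal.ofReal (Real.exp (K * ∑ k ∈ Finset.range n, r ^ k)) := by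
    intro n
    induction n with
    | zero => simp
    | succ n ih =>
      calc S (n+1) ≤ S n + ENNReal.ofReal (K * r ^ n) * S n := h n
        _ = S n * ENNReal.ofReal (1 + K * r ^ n) := by
            rw [ENNReal.ofReal_add (by norm_num) (by positivity), mul_add]; simp [mul_comm]
        _ ≤ S n * ENNReal.ofReal (Real.exp (K * r ^ n)) := by
            gcongr
            have := Real.add_one_le_exp (K * r ^ n)
            linarith
        _ ≤ (S 0 * ENNReal.ofReal (Real.exp (K * ∑ k ∈ Finset.range n, r ^ k))) *
              ENNReal.ofReal (Real.exp (K * r ^ n)) := by gcongr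
        _ = _ := by
            rw [mul_assoc, ← ENNReal.ofReal_mul (Real.exp_pos _).le, ← Real.exp_add,
              Finset.sum_range_succ, mul_add]
  refine (h1 n).trans ?_
  gcongr
  rw [div_eq_mul_inv]
  gcongr
  rw [← tsum_geometric_of_lt_one hr.le hr1]
  exact (summable_geometric_of_lt_one hr.le hr1).sum_le_tsum _ (fun i _ => by positivity)
lemma aux_laplace_fin (P : Measure ℝ) [IsProbabilityMeasure P] (ν : Measure ℝ)
    (hinv : ∀ g : ℝ → ℝ≥0∞, Measurable g →
      ∫⁻ z, g z ∂ν = ∫⁻ y, ∫⁻ z, g (z + hY y) ∂P ∂ν)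
    (hfin : ∀ x : ℝ, ν (Set.Iic x) < ⊤)
    (hi : Integrable (fun z : ℝ => z) P) (hmean : ∫ z, z ∂P = 0)
    (s : ℝ) (hs : 0 < s) (hs1 : s ≤ 1)
    (hes : Integrable (fun z => Real.exp (-(s * z))) P)
    (a : ℝ) (ha : 0 < a) (hPa : 0 < P (Iio (-(2 * a)))) (u : ℝ) (hu : 0 < u) :
    ∫⁻ y, ENNReal.ofReal (Real.exp (-(u * hY y))) ∂ν < ⊤ := by
  have hYm : Measurable hY := hY_cont.measurable
  set C := ENNReal.ofReal (2 + (∫ z, Real.exp (-(s * z)) ∂P) / s) with hC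
  set κ := ENNReal.ofReal a * P (Iio (-(2 * a))) with hκ
  have hκ0 : κ ≠ 0 := mul_ne_zero (by simpa using ha) hPa.ne'
  have hκt : κ ≠ ⊤ := ENNReal.mul_ne_top ENNReal.ofReal_ne_top (measure_ne_top _ _)
  set K := C / κ with hK
  have hKt : K ≠ ⊤ := ENNReal.div_ne_top ENNReal.ofReal_ne_top hκ0
  set f : ℝ → ℝ≥0∞ := fun y => ENNReal.ofReal (Real.exp (-(s * hY y))) with hf
  have hfm : Measurable f := by fun_prop
  set S : ℝ → ℝ≥0∞ := fun t => ∫⁻ y in {y | hY y < t}, f y ∂ν with hS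
  obtain ⟨L0, hL0a, hL0⟩ : ∃ L0, a ≤ L0 ∧ Real.exp (-L0) ≤ a / 2 := by
    refine ⟨max a (-Real.log (a/2)), le_max_left _ _, ?_⟩
    rw [← Real.le_log_iff_exp_le (by positivity)]
    have := le_max_right a (-Real.log (a/2))
    linarith
  set t0 := hY L0 with ht0
  have hms : ∀ t, MeasurableSet {y | hY y < t} := fun t => measurableSet_lt hYm measurable_const
  have hmw : ∀ t t', MeasurableSet {y | t ≤ hY y ∧ hY y < t'} := fun t t' =>
    (measurableSet_le measurable_const hYm).inter (measurableSet_lt hYm measurable_const)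
  have hwin : ∀ t, t0 ≤ t → ν {y | t ≤ hY y ∧ hY y < t + a / 2} ≤ K * S t := by
    intro t ht
    have ht1 : 0 < Real.exp t - 1 := by
      have : 0 < t := (hY_pos L0).trans_le ht
      have := Real.add_one_lt_exp this.ne'
      linarith
    set L := Real.log (Real.exp t - 1) with hLdef
    have hLt : hY L = t := by
      apply Real.exp_injective
      rw [hY_exp, hLdef, Real.exp_log ht1]; ring
    have hLL : L0 ≤ L := hY_strictMono.le_iff_le.1 (by rw [hLt]; exact ht)
    have h1 := aux_growth P ν hinv hfin hi hmean s hs hs1 hes a ha L (hL0a.trans hLL)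
    have h2 : {y | hY y < t} = Iio L := by
      ext y; simp only [mem_setOf_eq, mem_Iio]; rw [← hLt]; exact hY_strictMono.lt_iff_lt
    have h3 : {y | t ≤ hY y ∧ hY y < t + a / 2} ⊆ {y | L ≤ hY y ∧ hY y ≤ L + a} := by
      rintro y ⟨h, h'⟩
      have h4 := hY_gt L
      have h5 := hY_le L
      have h6 : Real.exp (-L) ≤ Real.exp (-L0) := Real.exp_le_exp.2 (by linarith)
      rw [hLt] at h4 h5
      exact ⟨by linarith, by linarith⟩
    rw [← hC, ← hκ] at h1
    simp only [hS, h2]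
    refine (measure_mono h3).trans ?_
    rw [hK, ENNReal.div_eq_inv_mul, mul_assoc, ← ENNReal.div_eq_inv_mul,
      ENNReal.le_div_iff_mul_le (Or.inl hκ0) (Or.inl hκt), mul_comm]
    exact h1
  set b := a / 2 with hb
  have hb0 : 0 < b := by positivity
  set T : ℕ → ℝ := fun n => t0 + n * b with hT
  have hTt : ∀ n, t0 ≤ T n := fun n => by simp only [hT]; have : 0 ≤ n * b := by positivity
                                          linarith
  have ht00 : 0 < t0 := hY_pos L0
  have hTs : ∀ n, T (n+1) = T n + b := fun n => by simp only [hT]; push_cast; ring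
  have hstep : ∀ n, S (T (n+1)) ≤ S (T n) +
      ENNReal.ofReal (K.toReal * (Real.exp (-(s * b))) ^ n) * S (T n) := by
    intro n
    have hun : {y | hY y < T (n+1)} ⊆ {y | hY y < T n} ∪ {y | T n ≤ hY y ∧ hY y < T n + b} := by
      intro y hy
      rw [hTs] at hy
      rcases lt_or_ge (hY y) (T n) with h | h
      · exact Or.inl h
      · exact Or.inr ⟨h, hy⟩
    refine (lintegral_mono_set hun).trans ((lintegral_union_le _ _ _).trans ?_)
    gcongr
    calc ∫⁻ y in {y | T n ≤ hY y ∧ hY y < T n + b}, f y ∂ν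
        ≤ ∫⁻ y in {y | T n ≤ hY y ∧ hY y < T n + b}, ENNReal.ofReal (Real.exp (-(s * b)) ^ n) ∂ν := by
          refine setLIntegral_mono measurable_const fun y hy => ENNReal.ofReal_le_ofReal ?_
          rw [← Real.exp_nat_mul]
          apply Real.exp_le_exp.2
          have h1 : t0 + n * b ≤ hY y := hy.1
          nlinarith
      _ = ENNReal.ofReal (Real.exp (-(s * b)) ^ n) * ν {y | T n ≤ hY y ∧ hY y < T n + b} := by
          rw [lintegral_const, Measure.restrict_apply_univ]
      _ ≤ ENNReal.ofReal (Real.exp (-(s * b)) ^ n) * (K * S (T n)) := by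
          gcongr; exact hwin _ (hTt n)
      _ = _ := by
          rw [ENNReal.ofReal_mul ENNReal.toReal_nonneg, ENNReal.ofReal_toReal hKt]; ring
  have hg := aux_gron (fun n => S (T n)) K.toReal (Real.exp (-(s * b))) ENNReal.toReal_nonneg
    (Real.exp_pos _) (Real.exp_lt_one_iff.2 (by nlinarith [mul_pos hs hb0])) hstep
  have hνt : ν {y | hY y < t0} < ⊤ :=
    lt_of_le_of_lt (measure_mono fun y hy => ((hY_gt y).trans hy).le) (hfin t0)
  have hT0 : T 0 = t0 := by simp [hT]
  have hS0 : S (T 0) < ⊤ := by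
    rw [hT0]
    refine lt_of_le_of_lt (setLIntegral_mono (g := fun _ => 1) measurable_const fun y hy => ?_) ?_
    · simp only [hf]
      refine ENNReal.ofReal_le_one.2 (Real.exp_le_one_iff.2 ?_)
      have := mul_pos hs (hY_pos y)
      linarith
    · rw [lintegral_const, Measure.restrict_apply_univ, one_mul]; exact hνt
  set B := K * (S (T 0) * ENNReal.ofReal (Real.exp (K.toReal / (1 - Real.exp (-(s * b)))))) with hB
  have hBt : B < ⊤ := ENNReal.mul_lt_top hKt.lt_top (ENNReal.mul_lt_top hS0 ENNReal.ofReal_lt_top)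
  have hwB : ∀ n, ν {y | T n ≤ hY y ∧ hY y < T n + b} ≤ B := fun n =>
    (hwin _ (hTt n)).trans (by rw [hB]; gcongr; exact hg n)
  have hle : ∀ y, ENNReal.ofReal (Real.exp (-(u * hY y))) ≤
      {y | hY y < t0}.indicator (fun _ => 1) y + ∑' n : ℕ,
        ENNReal.ofReal (Real.exp (-(u * T n))) *
          {y | T n ≤ hY y ∧ hY y < T n + b}.indicator (fun _ => 1) y := by
    intro y
    rcases lt_or_ge (hY y) t0 with h | h
    · rw [indicator_of_mem (by exact h)]
      refine le_trans ?_ le_self_add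
      refine ENNReal.ofReal_le_one.2 (Real.exp_le_one_iff.2 ?_)
      have := mul_pos hu (hY_pos y)
      linarith
    · refine le_trans ?_ le_add_self
      set n := ⌊(hY y - t0) / b⌋₊ with hn
      have h1 : (n:ℝ) ≤ (hY y - t0) / b := Nat.floor_le (div_nonneg (by linarith) hb0.le)
      have h2 : (hY y - t0) / b < n + 1 := Nat.lt_floor_add_one _
      rw [le_div_iff₀ hb0] at h1
      rw [div_lt_iff₀ hb0] at h2
      refine le_trans ?_ (ENNReal.le_tsum n)
      have h3 : T n ≤ hY y ∧ hY y < T n + b := by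
        simp only [hT]; exact ⟨by linarith, by linarith⟩
      rw [indicator_of_mem (by exact h3), mul_one]
      refine ENNReal.ofReal_le_ofReal (Real.exp_le_exp.2 ?_)
      have := mul_le_mul_of_nonneg_left h3.1 hu.le
      linarith
  refine lt_of_le_of_lt (lintegral_mono hle) ?_
  rw [lintegral_add_left (measurable_const.indicator (hms _)), lintegral_tsum (fun n =>
    ((measurable_const.indicator (hmw _ _)).const_mul _).aemeasurable)]
  refine ENNReal.add_lt_top.2 ⟨?_, ?_⟩
  · rw [lintegral_indicator (hms _), lintegral_const, Measure.restrict_apply_univ, one_mul]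
    exact hνt
  have hsum : Summable (fun n : ℕ => Real.exp (-(u * T n))) := by
    have : (fun n : ℕ => Real.exp (-(u * T n)))
        = fun n : ℕ => Real.exp (-(u * t0)) * (Real.exp (-(u * b))) ^ n := by
      ext n
      rw [← Real.exp_nat_mul, ← Real.exp_add]
      congr 1; simp only [hT]; ring
    rw [this]
    exact (summable_geometric_of_lt_one (Real.exp_pos _).le
      (Real.exp_lt_one_iff.2 (by nlinarith [mul_pos hu hb0]))).mul_left _
  refine lt_of_le_of_lt (b := ∑' n : ℕ, ENNReal.ofReal (Real.exp (-(u * T n))) * B)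
    (ENNReal.tsum_le_tsum (fun n => ?_)) ?_
  · rw [lintegral_const_mul _ (measurable_const.indicator (hmw _ _)), lintegral_indicator (hmw _ _),
      lintegral_const, Measure.restrict_apply_univ, one_mul]
    gcongr
    exact hwB n
  · rw [ENNReal.tsum_mul_right]
    exact ENNReal.mul_lt_top hsum.tsum_ofReal_lt_top hBt
/-- Laplace transform of P -/
noncomputable def lap (P : Measure ℝ) (u : ℂ) : ℂ := ∫ z : ℝ, Complex.exp (-(u * z)) ∂P

lemma strip_open (ρ : ℝ) : IsOpen {u : ℂ | |u.re| < ρ} :=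
  isOpen_lt (continuous_abs.comp Complex.continuous_re) continuous_const

lemma norm_cexp_neg_mul (u : ℂ) (x : ℝ) : ‖Complex.exp (-(u * x))‖ = Real.exp (-(u.re * x)) := by
  rw [Complex.norm_exp]; simp

lemma lap_diff (P : Measure ℝ) (s : ℝ) (hexp : Integrable (fun z => Real.exp (s * |z|)) P) :
    DifferentiableOn ℂ (lap P) {u : ℂ | |u.re| < s} := by
  refine aux_hol (strip_open s) (fun z u => Complex.exp (-(u * z))) _ hexp (by fun_prop)
    (fun y => by fun_prop) (Eventually.of_forall fun z u hu => ?_)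
  rw [norm_cexp_neg_mul]
  apply Real.exp_le_exp.2
  have hu' : |u.re| < s := hu
  calc -(u.re * z) ≤ |u.re * z| := neg_le_abs _
    _ = |u.re| * |z| := abs_mul _ _
    _ ≤ s * |z| := by gcongr

lemma lap_RL (ζ : ℝ → ℝ) (hζmeas : Measurable ζ) (hζnn : ∀ x, 0 ≤ ζ x)
    (P : Measure ℝ) (hP : P = volume.withDensity (fun x => ENNReal.ofReal (ζ x))) :
    Tendsto (fun t : ℝ => lap P (t * Complex.I)) (cocompact ℝ) (nhds 0) := by
  have h1 := Real.tendsto_integral_exp_smul_cocompact (fun x => (ζ x : ℂ))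
  have hc : (2 * Real.pi)⁻¹ ≠ 0 := by positivity
  have h2 := h1.comp (Homeomorph.mulRight₀ _ hc).isClosedEmbedding.tendsto_cocompact
  refine h2.congr fun t => ?_
  simp only [Function.comp, Homeomorph.coe_mulRight₀, lap]
  rw [hP, integral_withDensity_eq_integral_toReal_smul (by fun_prop)
    (Eventually.of_forall fun x => ENNReal.ofReal_lt_top)]
  congr 1
  ext x
  rw [ENNReal.toReal_ofReal (hζnn x), Circle.smul_def, Real.fourierChar_apply, smul_eq_mul,
    Complex.real_smul, mul_comm]
  congr 2
  push_cast
  have : (Real.pi : ℂ) ≠ 0 := by exact_mod_cast Real.pi_ne_zero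
  field_simp

lemma cexp_int (P : Measure ℝ) (s : ℝ) (hexp : Integrable (fun z => Real.exp (s * |z|)) P)
    (u : ℂ) (hu : |u.re| ≤ s) : Integrable (fun z : ℝ => Complex.exp (-(u * z))) P := by
  refine hexp.mono' (by fun_prop) (Eventually.of_forall fun z => ?_)
  rw [norm_cexp_neg_mul]
  apply Real.exp_le_exp.2
  calc -(u.re * z) ≤ |u.re * z| := neg_le_abs _
    _ = |u.re| * |z| := abs_mul _ _
    _ ≤ s * |z| := by gcongr

lemma lap_ne_one (P : Measure ℝ) [IsProbabilityMeasure P] [NullSingletonClass P]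
    (t : ℝ) (ht : t ≠ 0) : lap P (t * Complex.I) ≠ 1 := by
  intro h
  have hint : Integrable (fun z : ℝ => Complex.exp (-((t * Complex.I) * z))) P :=
    Integrable.of_bound (by fun_prop) 1 (Eventually.of_forall fun z => by
      rw [norm_cexp_neg_mul]; simp)
  have h1 : ∫ z, Real.cos (t * z) ∂P = 1 := by
    have h2 := congrArg Complex.re h
    unfold lap at h2
    have h3 := integral_re (𝕜 := ℂ) hint
    simp only [RCLike.re_eq_complex_re] at h3
    rw [← h3] at h2
    simp only [Complex.one_re] at h2
    rw [← h2]
    congr 1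
    ext z
    rw [Complex.exp_re]
    simp
  have hci : Integrable (fun z => Real.cos (t * z)) P :=
    Integrable.of_bound (by fun_prop) 1 (Eventually.of_forall fun z => Real.abs_cos_le_one _)
  have h2 : ∫ z, (1 - Real.cos (t * z)) ∂P = 0 := by
    rw [integral_sub (integrable_const _) hci, h1]; simp
  rw [integral_eq_zero_iff_of_nonneg (fun z => sub_nonneg.2 (Real.cos_le_one _))
    ((integrable_const _).sub hci)] at h2
  have hcount : (range fun n : ℤ => (n : ℝ) * (2 * Real.pi) / t).Countable := countable_range _
  have hnull := hcount.measure_zero P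
  have h3 : ∀ᵐ z ∂P, z ∈ range fun n : ℤ => (n : ℝ) * (2 * Real.pi) / t := by
    filter_upwards [h2] with z hz
    have hz' : Real.cos (t * z) = 1 := by
      have : 1 - Real.cos (t * z) = 0 := hz
      linarith
    obtain ⟨n, hn⟩ := (Real.cos_eq_one_iff _).1 hz'
    exact ⟨n, by simp only; rw [hn]; field_simp⟩
  have h4 : ∀ᵐ z ∂P, z ∉ range fun n : ℤ => (n : ℝ) * (2 * Real.pi) / t :=
    measure_eq_zero_iff_ae_notMem.1 hnull
  obtain ⟨z, hz, hz'⟩ := (h3.and h4).exists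
  exact hz' hz

lemma lap_close (P : Measure ℝ) (s : ℝ) (hs : 0 < s)
    (hexp : Integrable (fun z => Real.exp (s * |z|)) P) (u : ℂ) (hu : |u.re| ≤ s / 2) :
    ‖lap P u - lap P (u.im * Complex.I)‖ ≤ |u.re| * (2 / s * ∫ z, Real.exp (s * |z|) ∂P) := by
  unfold lap
  rw [← integral_sub (cexp_int P s hexp u (by linarith)) (cexp_int P s hexp _ (by simp [hs.le]))]
  rw [← mul_assoc, ← integral_const_mul]
  refine norm_integral_le_of_norm_le (hexp.const_mul _) (Eventually.of_forall fun z => ?_)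
  have h1 : Complex.exp (-(u * z)) - Complex.exp (-(u.im * Complex.I * z))
      = Complex.exp (-(u.im * Complex.I * z)) * (Complex.exp (((-(u.re * z) : ℝ) : ℂ)) - 1) := by
    rw [mul_sub, ← Complex.exp_add, mul_one]
    congr 2
    conv_lhs => rw [← Complex.re_add_im u]
    push_cast; ring
  have h2 := Complex.norm_exp_sub_sum_le_norm_mul_exp (((-(u.re * z) : ℝ) : ℂ)) 1
  simp only [Finset.range_one, Finset.sum_singleton, pow_zero, Nat.factorial_zero, Nat.cast_one,
    div_one, pow_one, Complex.norm_real, norm_neg, Real.norm_eq_abs, abs_mul] at h2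
  rw [h1, norm_mul, norm_cexp_neg_mul]
  simp only [Complex.mul_re, Complex.ofReal_re, Complex.I_re, mul_zero, Complex.ofReal_im,
    Complex.I_im, zero_mul, sub_zero, neg_zero, Real.exp_zero, one_mul]
  refine h2.trans ?_
  have h3 : |z| ≤ 2 / s * Real.exp (s / 2 * |z|) := by
    have := Real.add_one_le_exp (s / 2 * |z|)
    rw [div_mul_eq_mul_div, le_div_iff₀ hs]
    nlinarith
  have h4 : Real.exp (|u.re| * |z|) ≤ Real.exp (s / 2 * |z|) := Real.exp_le_exp.2 (by gcongr)
  calc |u.re| * |z| * Real.exp (|u.re| * |z|)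
      ≤ |u.re| * (2 / s * Real.exp (s / 2 * |z|)) * Real.exp (s / 2 * |z|) := by gcongr
    _ = |u.re| * (2 / s) * (Real.exp (s / 2 * |z|) * Real.exp (s / 2 * |z|)) := by ring
    _ = _ := by rw [← Real.exp_add]; congr 2; ring

lemma lap_deriv_zero (P : Measure ℝ) [IsProbabilityMeasure P] (s : ℝ) (hs : 0 < s)
    (hexp : Integrable (fun z => Real.exp (s * |z|)) P) (hmean : ∫ z, z ∂P = 0) :
    deriv (lap P) 0 = 0 := by
  have h0 : (0:ℂ).re ∈ interior (integrableExpSet (fun z : ℝ => z) P) := by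
    rw [mem_interior]
    refine ⟨Ioo (-s) s, fun t ht => ?_, isOpen_Ioo, by simp [hs]⟩
    refine hexp.mono' (by fun_prop) (Eventually.of_forall fun z => ?_)
    rw [Real.norm_of_nonneg (Real.exp_pos _).le]
    apply Real.exp_le_exp.2
    have : |t| ≤ s := abs_le.2 ⟨ht.1.le, ht.2.le⟩
    calc t * z ≤ |t * z| := le_abs_self _
    _ = |t| * |z| := abs_mul _ _
    _ ≤ s * |z| := by gcongr
  have h1 := hasDerivAt_complexMGF h0
  have h2 : lap P = fun u => complexMGF (fun z : ℝ => z) P (-u) := by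
    ext u; simp [lap, complexMGF]
  have h3 : HasDerivAt (lap P) (-(∫ z : ℝ, (z : ℂ) * Complex.exp (0 * z) ∂P)) 0 := by
    rw [h2]
    have h1' : HasDerivAt (complexMGF (fun z : ℝ => z) P)
      (∫ z : ℝ, (z : ℂ) * Complex.exp (0 * z) ∂P) (-0) := by simpa using h1
    have h4 := HasDerivAt.comp (0:ℂ) h1' (hasDerivAt_neg (0:ℂ))
    rw [mul_neg_one] at h4
    exact h4
  rw [h3.deriv]
  have h5 : ∫ z : ℝ, (z : ℂ) ∂P = ((∫ z, z ∂P : ℝ) : ℂ) := integral_complex_ofReal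
  simp only [zero_mul, Complex.exp_zero, mul_one, h5, hmean]
  simp

lemma lap_lower (P : Measure ℝ) [IsProbabilityMeasure P] (s : ℝ)
    (hexp : Integrable (fun z => Real.exp (s * |z|)) P) (hi : Integrable (fun z : ℝ => z) P)
    (hmean : ∫ z, z ∂P = 0) (a : ℝ) (ha : 0 < a) (x : ℝ) (hx : 0 < x) (hxs : x ≤ s) :
    2 * a ^ 2 * P.real (Iio (-(2 * a))) * x ^ 2 ≤ ‖lap P x - 1‖ := by
  have hxi : Integrable (fun z : ℝ => Real.exp (-(x * z))) P := by
    have := (cexp_int P s hexp x (by simpa [abs_of_pos hx] using hxs)).norm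
    simpa [norm_cexp_neg_mul] using this
  have h1 : lap P x = ((∫ z, Real.exp (-(x * z)) ∂P : ℝ) : ℂ) := by
    rw [lap, ← integral_complex_ofReal]; push_cast; rfl
  rw [h1, ← Complex.ofReal_one, ← Complex.ofReal_sub, Complex.norm_real]
  refine le_trans ?_ (le_abs_self _)
  have h2 : (∫ z, Real.exp (-(x * z)) ∂P) - 1 = ∫ z, (Real.exp (-(x * z)) - 1 + x * z) ∂P := by
    have hsub : Integrable (fun z => Real.exp (-(x * z)) - 1) P := hxi.sub (integrable_const _)
    rw [integral_add hsub (hi.const_mul _),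
      integral_sub hxi (integrable_const _), integral_const_mul, hmean]
    simp
  rw [h2]
  have h3 : 2 * a ^ 2 * P.real (Iio (-(2 * a))) * x ^ 2
      = ∫ z, (Iio (-(2 * a))).indicator (fun _ => 2 * a ^ 2 * x ^ 2) z ∂P := by
    rw [integral_indicator_const _ measurableSet_Iio, smul_eq_mul]; ring
  rw [h3]
  refine integral_mono ((integrable_const _).indicator measurableSet_Iio)
    ((hxi.sub (integrable_const _)).add (hi.const_mul _)) fun z => ?_
  simp only
  by_cases hz : z < -(2 * a)
  · rw [indicator_of_mem (by exact hz)]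
    have h4 : 0 ≤ -(x * z) := by nlinarith
    have h5 := Real.quadratic_le_exp_of_nonneg h4
    have h6 : (2 * a) ^ 2 ≤ z ^ 2 := by nlinarith
    have h7 : (2 * a) ^ 2 * x ^ 2 ≤ z ^ 2 * x ^ 2 := by gcongr
    nlinarith
  · rw [indicator_of_notMem (by exact hz)]
    have := Real.add_one_le_exp (-(x * z))
    linarith
lemma strip_nhds {ρ : ℝ} (hρ : 0 < ρ) : {u : ℂ | |u.re| < ρ} ∈ nhds (0:ℂ) :=
  (strip_open ρ).mem_nhds (by simpa using hρ)

lemma lap_factor (P : Measure ℝ) [IsProbabilityMeasure P] [NullSingletonClass P]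
    (s : ℝ) (hs : 0 < s)
    (hexp : Integrable (fun z => Real.exp (s * |z|)) P) (hi : Integrable (fun z : ℝ => z) P)
    (hmean : ∫ z, z ∂P = 0) (a : ℝ) (ha : 0 < a) (hPa : 0 < P (Iio (-(2 * a))))
    (hRL : Tendsto (fun t : ℝ => lap P (t * Complex.I)) (cocompact ℝ) (nhds 0)) :
    ∃ ρ, 0 < ρ ∧ ρ ≤ s ∧ ∃ Z : ℂ → ℂ, DifferentiableOn ℂ Z {u : ℂ | |u.re| < ρ} ∧
      ∀ u : ℂ, |u.re| < ρ → Z u ≠ 0 ∧ lap P u - 1 = u ^ 2 * Z u := by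
  have hd := lap_diff P s hexp
  set D := dslope (lap P) 0 with hD
  set Z := dslope D 0 with hZ
  have hDd : DifferentiableOn ℂ D {u : ℂ | |u.re| < s} :=
    (Complex.differentiableOn_dslope (strip_nhds hs)).2 hd
  have hZd : DifferentiableOn ℂ Z {u : ℂ | |u.re| < s} :=
    (Complex.differentiableOn_dslope (strip_nhds hs)).2 hDd
  have hl0 : lap P 0 = 1 := by simp [lap]
  have hD0 : D 0 = 0 := by rw [hD, dslope_same]; exact lap_deriv_zero P s hs hexp hmean
  have hfac : ∀ u, lap P u - 1 = u ^ 2 * Z u := by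
    intro u
    have h1 := sub_smul_dslope (lap P) 0 u
    have h2 := sub_smul_dslope D 0 u
    rw [hl0, ← hD] at h1
    rw [hD0, ← hZ] at h2
    simp only [sub_zero, smul_eq_mul] at h1 h2
    rw [← h1, ← h2]; ring
  set c := 2 * a ^ 2 * P.real (Iio (-(2 * a))) with hc
  have hc0 : 0 < c := by
    have : 0 < P.real (Iio (-(2 * a))) := ENNReal.toReal_pos hPa.ne' (measure_ne_top _ _)
    positivity
  have hZc : ContinuousAt Z 0 := (hZd.differentiableAt (strip_nhds hs)).continuousAt
  have hZ0 : Z 0 ≠ 0 := by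
    intro h0
    obtain ⟨r, hr, hr'⟩ := Metric.continuousAt_iff.1 hZc c hc0
    set x := min s (r / 2) with hx
    have hx0 : 0 < x := lt_min hs (by positivity)
    have hxr : x < r := (min_le_right _ _).trans_lt (by linarith)
    have h1 := lap_lower P s hexp hi hmean a ha x hx0 (min_le_left _ _)
    rw [hfac, norm_mul, norm_pow, Complex.norm_real, Real.norm_of_nonneg hx0.le, ← hc] at h1
    have h2 := hr' (x := (x:ℂ)) (by simpa [abs_of_pos hx0] using hxr)
    rw [h0, dist_zero_right] at h2
    have : 0 < x ^ 2 := by positivity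
    nlinarith
  obtain ⟨r, hr, hr'⟩ := Metric.eventually_nhds_iff.1 (hZc.eventually_ne hZ0)
  have hψc : Continuous (fun t : ℝ => lap P (t * Complex.I)) := by
    refine hd.continuousOn.comp_continuous (by fun_prop) (fun t => ?_)
    simpa using hs
  obtain ⟨η, hη, hη'⟩ : ∃ η > 0, ∀ t : ℝ, r / 2 ≤ |t| → η ≤ ‖lap P (t * Complex.I) - 1‖ := by
    have h1 : ∀ᶠ t : ℝ in cocompact ℝ, ‖lap P (t * Complex.I)‖ < 1 / 2 := by
      have := hRL.norm
      rw [norm_zero] at this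
      exact this.eventually_lt_const (by norm_num)
    obtain ⟨K, hK, hK'⟩ := mem_cocompact.1 h1
    have hcl : IsClosed {t : ℝ | r / 2 ≤ |t|} := isClosed_le continuous_const continuous_abs
    obtain ⟨η, hη, hη'⟩ := (hK.inter_right hcl).exists_forall_le' (a := (0:ℝ))
      (f := fun t : ℝ => ‖lap P (t * Complex.I) - 1‖)
      ((hψc.sub continuous_const).norm.continuousOn) (fun t ht => by
        refine norm_pos_iff.2 (sub_ne_zero.2 (lap_ne_one P t ?_))
        rintro rfl
        have h2 : r / 2 ≤ |(0:ℝ)| := ht.2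
        rw [abs_zero] at h2
        linarith)
    refine ⟨min η (1/2), lt_min hη (by norm_num), fun t ht => ?_⟩
    by_cases htK : t ∈ K
    · exact (min_le_left _ _).trans (hη' t ⟨htK, ht⟩)
    · have h2 : ‖lap P (t * Complex.I)‖ < 1 / 2 := hK' htK
      refine (min_le_right _ _).trans ?_
      have h3 := norm_sub_norm_le (1:ℂ) (lap P (t * Complex.I))
      rw [norm_sub_rev, norm_one] at h3
      linarith
  set B := 2 / s * ∫ z, Real.exp (s * |z|) ∂P with hB
  have hB0 : 0 ≤ B := by
    have : 0 ≤ ∫ z, Real.exp (s * |z|) ∂P := integral_nonneg fun z => (Real.exp_pos _).le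
    positivity
  refine ⟨min (s / 2) (min (r / 2) (η / (B + 1))), ?_, ?_, Z, hZd.mono ?_, ?_⟩
  · positivity
  · exact (min_le_left _ _).trans (by linarith)
  · intro u hu
    have : |u.re| < _ := hu
    have h2 := this.trans_le (min_le_left _ _)
    show |u.re| < s
    linarith
  · intro u hu
    refine ⟨?_, hfac u⟩
    have h1 := hu.trans_le (min_le_left _ _)
    have h2 := hu.trans_le ((min_le_right _ _).trans (min_le_left _ _))
    have h3 := hu.trans_le ((min_le_right _ _).trans (min_le_right _ _))
    by_cases him : r / 2 ≤ |u.im|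
    · intro hz
      have h4 := hfac u
      rw [hz, mul_zero] at h4
      have h5 := lap_close P s hs hexp u h1.le
      have h6 := hη' u.im him
      rw [sub_eq_zero.1 h4, norm_sub_rev, ← hB] at h5
      rw [lt_div_iff₀ (by positivity)] at h3
      have : 0 ≤ |u.re| := abs_nonneg _
      nlinarith
    · push Not at him
      apply hr'
      rw [dist_zero_right]
      have := Complex.norm_le_abs_re_add_abs_im u
      linarith

lemma G_bound (s : ℝ) (hs : 0 < s) (hs2 : s ≤ 1 / 2) (u : ℂ) (hu : |u.re| ≤ s) (y : ℝ) :
    ‖Complex.exp (-(u * y)) - Complex.exp (-(u * hY y))‖ ≤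
      (4 + ‖u‖ * Real.exp ‖u‖) * Real.exp (-(s * y)) := by
  have hub := abs_le.1 hu
  have hpos := Real.exp_pos (-(s * y))
  have hn : 0 ≤ ‖u‖ * Real.exp ‖u‖ := by positivity
  rcases le_total y 0 with hy | hy
  · refine (norm_sub_le _ _).trans ?_
    rw [norm_cexp_neg_mul, norm_cexp_neg_mul]
    have h1 : Real.exp (-(u.re * y)) ≤ Real.exp (-(s * y)) := Real.exp_le_exp.2 (by nlinarith)
    have h2 : Real.exp (-(u.re * hY y)) ≤ 3 := by
      have h3 : hY y ≤ 1 := (hY_le' y).trans (Real.exp_le_one_iff.2 hy)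
      have h4 := hY_pos y
      have h5 : -(u.re * hY y) ≤ 1 := by nlinarith
      refine (Real.exp_le_exp.2 h5).trans ?_
      have := Real.exp_one_lt_d9
      linarith
    have h6 : 1 ≤ Real.exp (-(s * y)) := Real.one_le_exp (by nlinarith)
    nlinarith
  · set d := hY y - y with hd
    have hd0 : 0 ≤ d := by have := hY_gt y; linarith
    have hd1 : d ≤ Real.exp (-y) := by have := hY_le y; linarith
    have hd2 : d ≤ 1 := hd1.trans (Real.exp_le_one_iff.2 (by linarith))
    have h1 : Complex.exp (-(u * y)) - Complex.exp (-(u * hY y)) =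
        -(Complex.exp (-(u * y)) * (Complex.exp (-(u * d)) - 1)) := by
      rw [mul_sub, ← Complex.exp_add, mul_one, neg_sub]
      congr 2
      rw [hd]; push_cast; ring
    have h2 := Complex.norm_exp_sub_sum_le_norm_mul_exp (-(u * d)) 1
    simp only [Finset.range_one, Finset.sum_singleton, pow_zero, Nat.factorial_zero, Nat.cast_one,
      div_one, pow_one, norm_neg, norm_mul, Complex.norm_real, Real.norm_of_nonneg hd0] at h2
    rw [h1, norm_neg, norm_mul, norm_cexp_neg_mul]
    have h3 : Real.exp (‖u‖ * d) ≤ Real.exp ‖u‖ := Real.exp_le_exp.2 (by nlinarith [norm_nonneg u])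
    calc Real.exp (-(u.re * y)) * ‖Complex.exp (-(u * d)) - 1‖
        ≤ Real.exp (s * y) * (‖u‖ * Real.exp (-y) * Real.exp ‖u‖) := by
          refine mul_le_mul (Real.exp_le_exp.2 (by nlinarith)) (h2.trans ?_) (norm_nonneg _)
            (Real.exp_pos _).le
          gcongr
      _ = (‖u‖ * Real.exp ‖u‖) * (Real.exp (s * y) * Real.exp (-y)) := by ring
      _ ≤ (‖u‖ * Real.exp ‖u‖) * Real.exp (-(s * y)) := by
          rw [← Real.exp_add]
          gcongr
          nlinarith
      _ ≤ _ := by nlinarith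

noncomputable def Gfun (ν : Measure ℝ) (u : ℂ) : ℂ :=
  ∫ y : ℝ, (Complex.exp (-(u * y)) - Complex.exp (-(u * hY y))) ∂ν

lemma G_diff (ν : Measure ℝ) (s : ℝ) (hs : 0 < s) (hs2 : s ≤ 1 / 2)
    (hint : Integrable (fun y => Real.exp (-(s * y))) ν) :
    DifferentiableOn ℂ (Gfun ν) {u : ℂ | |u.re| < s} := by
  intro u hu
  have hc := hY_cont
  have hopen : IsOpen ({u : ℂ | |u.re| < s} ∩ Metric.ball 0 (‖u‖ + 1)) :=
    (strip_open s).inter Metric.isOpen_ball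
  have hmem : u ∈ {u : ℂ | |u.re| < s} ∩ Metric.ball 0 (‖u‖ + 1) := ⟨hu, by simp⟩
  have := aux_hol (μ := ν) hopen
    (fun y u => Complex.exp (-(u * y)) - Complex.exp (-(u * hY y)))
    (fun y => (4 + (‖u‖ + 1) * Real.exp (‖u‖ + 1)) * Real.exp (-(s * y)))
    (hint.const_mul _) (by fun_prop) (fun y => by fun_prop)
    (Eventually.of_forall fun y v hv => by
      refine (G_bound s hs hs2 v (le_of_lt hv.1) y).trans ?_
      have : ‖v‖ ≤ ‖u‖ + 1 := by have := hv.2; rw [mem_ball_zero_iff] at this; exact this.le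
      gcongr)
  exact (this.differentiableAt (hopen.mem_nhds hmem)).differentiableWithinAt

noncomputable def Mfun (ν : Measure ℝ) (u : ℂ) : ℂ :=
  ∫ y : ℝ, Complex.exp (-(u * hY y)) ∂ν

lemma M_diff (ν : Measure ℝ)
    (hint : ∀ x, 0 < x → Integrable (fun y => Real.exp (-(x * hY y))) ν) :
    DifferentiableOn ℂ (Mfun ν) {u : ℂ | 0 < u.re} := by
  intro u hu
  have hu' : 0 < u.re := hu
  have hc := hY_cont
  have hopen : IsOpen {v : ℂ | u.re / 2 < v.re} := isOpen_lt continuous_const Complex.continuous_re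
  have hmem : u ∈ {v : ℂ | u.re / 2 < v.re} := by show u.re / 2 < u.re; linarith
  have := aux_hol (μ := ν) hopen (fun y u => Complex.exp (-(u * hY y))) _
    (hint (u.re / 2) (by linarith)) (by fun_prop) (fun y => by fun_prop)
    (Eventually.of_forall fun y v hv => by
      rw [norm_cexp_neg_mul]
      have h1 : u.re / 2 < v.re := hv
      have h2 := hY_pos y
      exact Real.exp_le_exp.2 (by nlinarith))
  exact (this.differentiableAt (hopen.mem_nhds hmem)).differentiableWithinAt
lemma aux_assembly (M G Z : ℂ → ℂ) (Mr : ℝ → ℝ) (ρ : ℝ) (hρ : 0 < ρ)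
    (hM : DifferentiableOn ℂ M {u : ℂ | 0 < u.re})
    (hMr : ∀ x : ℝ, 0 < x → M x = Mr x) (hMr0 : ∀ x : ℝ, 0 < x → 0 ≤ Mr x)
    (hunb : ∀ B r : ℝ, 0 < r → ∃ x, 0 < x ∧ x < r ∧ B < Mr x)
    (hG : DifferentiableOn ℂ G {u : ℂ | |u.re| < ρ}) (hG0 : G 0 = 0)
    (hZ : DifferentiableOn ℂ Z {u : ℂ | |u.re| < ρ}) (hZ0 : ∀ u : ℂ, |u.re| < ρ → Z u ≠ 0)
    (hid : ∀ u : ℂ, 0 < u.re → u.re < ρ → M u * (u ^ 2 * Z u) = G u) :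
    ∃ m : ℝ, 0 < m ∧ ∃ c : ℝ, ∃ H : ℂ → ℂ, DifferentiableOn ℂ H {u : ℂ | -ρ < u.re} ∧
      ∀ u : ℂ, 0 < u.re → M u = (m : ℂ) / u + (c : ℂ) + u * H u := by
  classical
  set K : ℂ → ℂ := fun u => dslope G 0 u / Z u with hK
  have hKd : DifferentiableOn ℂ K {u : ℂ | |u.re| < ρ} :=
    ((Complex.differentiableOn_dslope (strip_nhds hρ)).2 hG).div hZ (fun u hu => hZ0 u hu)
  set D := dslope K 0 with hD
  have hDd : DifferentiableOn ℂ D {u : ℂ | |u.re| < ρ} :=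
    (Complex.differentiableOn_dslope (strip_nhds hρ)).2 hKd
  set H1 := dslope D 0 with hH1
  have hHd : DifferentiableOn ℂ H1 {u : ℂ | |u.re| < ρ} :=
    (Complex.differentiableOn_dslope (strip_nhds hρ)).2 hDd
  have hKfac : ∀ u, K u = K 0 + u * D u := by
    intro u
    have h1 := sub_smul_dslope K 0 u
    rw [← hD] at h1
    simp only [sub_zero, smul_eq_mul] at h1
    rw [h1]; ring
  have hDfac : ∀ u, D u = D 0 + u * H1 u := by
    intro u
    have h1 := sub_smul_dslope D 0 u
    rw [← hH1] at h1
    simp only [sub_zero, smul_eq_mul] at h1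
    rw [h1]; ring
  have hMK : ∀ u : ℂ, 0 < u.re → u.re < ρ → u * M u = K u := by
    intro u h1 h2
    have hu : u ≠ 0 := by rintro rfl; simp at h1
    have hz := hZ0 u (by rw [abs_of_pos h1]; exact h2)
    have h3 := sub_smul_dslope G 0 u
    rw [hG0] at h3
    simp only [sub_zero, smul_eq_mul] at h3
    have h4 := hid u h1 h2
    rw [hK]
    simp only
    rw [eq_div_iff hz]
    apply mul_left_cancel₀ hu
    rw [h3, ← h4]; ring
  have hof : Tendsto (fun x : ℝ => (x : ℂ)) (nhdsWithin 0 (Ioi 0)) (nhds 0) := by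
    have : Tendsto (fun x : ℝ => (x : ℂ)) (nhds 0) (nhds ((0:ℝ):ℂ)) :=
      Complex.continuous_ofReal.tendsto 0
    rw [Complex.ofReal_zero] at this
    exact this.mono_left nhdsWithin_le_nhds
  have hev : ∀ᶠ x : ℝ in nhdsWithin 0 (Ioi 0), 0 < x ∧ x < ρ := by
    filter_upwards [Ioo_mem_nhdsGT hρ] with x hx using hx
  have hKr : ∀ x : ℝ, 0 < x → x < ρ → K x = ((x * Mr x : ℝ) : ℂ) := by
    intro x h1 h2
    rw [← hMK x (by simpa using h1) (by simpa using h2), hMr x h1]; push_cast; rfl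
  have hK0 : (K 0).im = 0 ∧ 0 ≤ (K 0).re := by
    have hcl : IsClosed {z : ℂ | z.im = 0 ∧ 0 ≤ z.re} :=
      (isClosed_eq Complex.continuous_im continuous_const).inter
        (isClosed_le continuous_const Complex.continuous_re)
    refine hcl.mem_of_tendsto
      ((hKd.differentiableAt (strip_nhds hρ)).continuousAt.tendsto.comp hof) ?_
    filter_upwards [hev] with x hx
    simp only [Function.comp]
    rw [hKr x hx.1 hx.2]
    exact ⟨Complex.ofReal_im _, by rw [Complex.ofReal_re]; exact mul_nonneg hx.1.le (hMr0 x hx.1)⟩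
  have hK0' : K 0 = ((K 0).re : ℂ) := Complex.ext (by simp) (by simp [hK0.1])
  have hDcont : ContinuousAt D 0 := (hDd.differentiableAt (strip_nhds hρ)).continuousAt
  have hD0 : (D 0).im = 0 := by
    have hcl : IsClosed {z : ℂ | z.im = 0} := isClosed_eq Complex.continuous_im continuous_const
    refine hcl.mem_of_tendsto (hDcont.tendsto.comp hof) ?_
    filter_upwards [hev] with x hx
    simp only [Function.comp]
    have hx0 : (x : ℂ) ≠ 0 := by exact_mod_cast hx.1.ne'
    have h1 : D x = (((x * Mr x - (K 0).re) / x : ℝ) : ℂ) := by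
      have h2 := hKfac x
      rw [hKr x hx.1 hx.2, hK0'] at h2
      push_cast at h2 ⊢
      rw [eq_div_iff hx0, h2]; simp; ring
    rw [h1]
    exact Complex.ofReal_im _
  have hD0' : D 0 = ((D 0).re : ℂ) := Complex.ext (by simp) (by simp [hD0])
  have hm : 0 < (K 0).re := by
    refine lt_of_le_of_ne hK0.2 fun h0 => ?_
    rw [← h0, Complex.ofReal_zero] at hK0'
    obtain ⟨r, hr, hr'⟩ := Metric.continuousAt_iff.1 hDcont 1 one_pos
    obtain ⟨x, hx0, hxr, hxB⟩ := hunb (‖D 0‖ + 1) (min r ρ) (lt_min hr hρ)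
    have h1 := hKfac x
    rw [← hMK x (by simpa using hx0) (by simpa using hxr.trans_le (min_le_right _ _)), hK0',
      zero_add, hMr x hx0] at h1
    have hx0' : (x : ℂ) ≠ 0 := by exact_mod_cast hx0.ne'
    have h2 := mul_left_cancel₀ hx0' h1
    have h3 := hr' (x := (x:ℂ)) (by simpa [abs_of_pos hx0] using hxr.trans_le (min_le_left _ _))
    rw [dist_eq_norm] at h3
    have h4 := norm_sub_norm_le (D x) (D 0)
    rw [← h2, Complex.norm_real, Real.norm_of_nonneg (hMr0 x hx0)] at h4
    rw [← h2] at h3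
    linarith
  have hform : ∀ u : ℂ, 0 < u.re → u.re < ρ →
      (M u - K 0 / u - D 0) / u = H1 u := by
    intro u h1 h2
    have hu : u ≠ 0 := by rintro rfl; simp at h1
    have h3 := hMK u h1 h2
    rw [hKfac, hDfac] at h3
    field_simp
    linear_combination h3
  refine ⟨(K 0).re, hm, (D 0).re,
    fun u => if 0 < u.re then (M u - K 0 / u - D 0) / u else H1 u, ?_, ?_⟩
  · intro u hu
    have hu' : -ρ < u.re := hu
    apply DifferentiableAt.differentiableWithinAt
    by_cases hur : 0 < u.re
    · have hopen : IsOpen {u : ℂ | 0 < u.re} := isOpen_lt continuous_const Complex.continuous_re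
      have hnh := hopen.mem_nhds (show u ∈ {u : ℂ | 0 < u.re} from hur)
      have hu0 : u ≠ 0 := by rintro rfl; simp at hur
      have hMu : DifferentiableAt ℂ M u := hM.differentiableAt hnh
      have : DifferentiableAt ℂ (fun u => (M u - K 0 / u - D 0) / u) u := by
        refine DifferentiableAt.div ((hMu.sub ?_).sub_const _) differentiableAt_id hu0
        exact (differentiableAt_const _).div differentiableAt_id hu0
      refine this.congr_of_eventuallyEq ?_
      filter_upwards [hnh] with v hv
      exact if_pos hv
    · have hmem : u ∈ {u : ℂ | |u.re| < ρ} := abs_lt.2 ⟨hu', by linarith⟩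
      have hnh := (strip_open ρ).mem_nhds hmem
      refine (hHd.differentiableAt hnh).congr_of_eventuallyEq ?_
      filter_upwards [hnh] with v hv
      have hv' := (abs_lt.1 (show |v.re| < ρ from hv)).2
      by_cases hv0 : 0 < v.re
      · simp only [hv0, if_true]; exact hform v hv0 hv'
      · simp only [hv0, if_false]
  · intro u hu
    have hu0 : u ≠ 0 := by rintro rfl; simp at hu
    simp only [hu, if_true]
    rw [← hK0', ← hD0']
    field_simp
    ring

lemma aux_map (P : Measure ℝ) [IsProbabilityMeasure P] (ν : Measure ℝ) [SigmaFinite ν]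
    (hinv : ∀ g : ℝ → ℝ≥0∞, Measurable g →
      ∫⁻ z, g z ∂ν = ∫⁻ y, ∫⁻ z, g (z + hY y) ∂P ∂ν) :
    ν = (P.prod ν).map (fun p => p.1 + hY p.2) := by
  have hYm : Measurable hY := hY_cont.measurable
  have hm : Measurable (fun p : ℝ × ℝ => p.1 + hY p.2) := by fun_prop
  ext A hA
  rw [Measure.map_apply hm hA, Measure.prod_apply_symm (hm hA)]
  have h1 := hinv (A.indicator 1) (measurable_one.indicator hA)
  rw [lintegral_indicator_one hA] at h1
  rw [h1]
  congr 1
  ext y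
  have hA' : MeasurableSet ((fun z => z + hY y) ⁻¹' A) := (by fun_prop : Measurable fun z => z + hY y) hA
  have : (fun z => A.indicator (1 : ℝ → ℝ≥0∞) (z + hY y)) = ((fun z => z + hY y) ⁻¹' A).indicator 1 := by
    ext z; by_cases h : z + hY y ∈ A <;> simp [indicator, h]
  rw [this, lintegral_indicator_one hA']
  rfl

theorem stmt9
    (ζ : ℝ → ℝ) (hζmeas : Measurable ζ) (hζnn : ∀ x, 0 ≤ ζ x)
    (hζprob : ∫ x, ζ x = 1)
    (hmean : ∫ x, x * ζ x = 0)
    (δ : ℝ) (hδ : 0 < δ) (Cδ : ℝ)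
    (htail : ∀ x : ℝ, 0 ≤ x → ∫ y in {y : ℝ | x < |y|}, ζ y ≤ Cδ * Real.exp (-δ * x))
    (θ : ℝ) (hθ0 : 0 < θ) (hθ1 : θ ≤ 1) (Cθ : ℝ)
    (hHolder : ∀ x y : ℝ, |ζ x - ζ y| ≤ Cθ * |x - y| ^ θ)
    (ν : Measure ℝ) (hν0 : ν ≠ 0) [SigmaFinite ν]
    (hinv : IsInvariantY ζ ν) (hfin : ∀ x : ℝ, ν (Set.Iic x) < ⊤) (hinfty : ν Set.univ = ⊤)
    (x₀ : ℝ)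
    (hx₀supp : ∃ ε > 0, ∀ u v : ℝ, x₀ - ε ≤ u → u < v → v ≤ x₀ + ε → 0 < ν (Set.Ioo u v))
    (hnorm : (ν (Set.Iic x₀)).toReal = 1)
 :
    (∀ u : ℂ,
        (∫⁻ x, ENNReal.ofReal (Real.exp (-u.re * x))
            ∂(Measure.map (fun x => Real.log (1 + Real.exp x)) ν) < ⊤) ↔ 0 < u.re) ∧
      ∃ m : ℝ, 0 < m ∧ ∃ c : ℝ, ∃ ρ : ℝ, 0 < ρ ∧ ρ ≤ 1 ∧ ∃ H : ℂ → ℂ,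
        DifferentiableOn ℂ H {u : ℂ | -ρ < u.re} ∧
        ∀ u : ℂ, 0 < u.re →
          ∫ x : ℝ, Complex.exp (-(u * x))
              ∂(Measure.map (fun x => Real.log (1 + Real.exp x)) ν)
            = (m : ℂ) / u + (c : ℂ) + u * H u := by
  have hYc := hY_cont
  have hYm : Measurable hY := hY_cont.measurable
  have hYf : (fun x => Real.log (1 + Real.exp x)) = hY := (funext hY_eq).symm
  rw [hYf]
  have hζi : Integrable ζ := by
    by_contra h
    rw [integral_undef h] at hζprob
    exact zero_ne_one hζprob
  obtain ⟨P, hP⟩ : ∃ P : Measure ℝ, P = volume.withDensity (fun x => ENNReal.ofReal (ζ x)) :=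
    ⟨_, rfl⟩
  have hPprob : IsProbabilityMeasure P := by
    constructor
    rw [hP, withDensity_apply _ MeasurableSet.univ, Measure.restrict_univ,
      ← ofReal_integral_eq_lintegral_ofReal hζi (Eventually.of_forall hζnn), hζprob]
    simp
  have hPna : NullSingletonClass P := by
    constructor
    intro x
    have : P ≪ volume := by rw [hP]; exact withDensity_absolutelyContinuous _ _
    exact this (by simp)
  have hinv' : ∀ g : ℝ → ℝ≥0∞, Measurable g →
      ∫⁻ z, g z ∂ν = ∫⁻ y, ∫⁻ z, g (z + hY y) ∂P ∂ν := by
    intro g hg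
    rw [hinv g hg]
    congr 1
    ext y
    rw [hP, lintegral_withDensity_eq_lintegral_mul _ (by fun_prop) (by fun_prop)]
    simp [mul_comm]
  have hmeanP : ∫ z, z ∂P = 0 := by
    rw [hP, integral_withDensity_eq_integral_toReal_smul (by fun_prop)
      (Eventually.of_forall fun x => ENNReal.ofReal_lt_top), ← hmean]
    congr 1
    ext x
    rw [ENNReal.toReal_ofReal (hζnn x), smul_eq_mul, mul_comm]
  obtain ⟨s, hs, hsδ, hs2⟩ : ∃ s, 0 < s ∧ s < δ ∧ s ≤ 1 / 2 :=
    ⟨min (δ / 2) (1 / 2), by positivity, (min_le_left _ _).trans_lt (by linarith), min_le_right _ _⟩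
  have hexp := aux_expmom ζ hζnn hζi δ Cδ htail P hP s hs hsδ
  have hi : Integrable (fun z : ℝ => z) P := by
    refine (hexp.const_mul (1 / s)).mono' (by fun_prop) (Eventually.of_forall fun z => ?_)
    have := Real.add_one_le_exp (s * |z|)
    rw [Real.norm_eq_abs, div_mul_eq_mul_div, le_div_iff₀ hs]
    linarith
  have hes : ∀ x, 0 < x → x ≤ s → Integrable (fun z => Real.exp (-(x * z))) P := by
    intro x h0 hx
    have := (cexp_int P s hexp x (by simpa [abs_of_pos h0] using hx)).norm
    simpa [norm_cexp_neg_mul] using this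
  obtain ⟨a, ha, hPa⟩ := aux_neg P hi hmeanP
  have hlf : ∀ x, 0 < x → ∫⁻ y, ENNReal.ofReal (Real.exp (-(x * hY y))) ∂ν < ⊤ := fun x hx =>
    aux_laplace_fin P ν hinv' hfin hi hmeanP s hs (by linarith) (hes s hs le_rfl) a ha hPa x hx
  have hMi : ∀ x, 0 < x → Integrable (fun y => Real.exp (-(x * hY y))) ν := fun x hx =>
    ⟨by fun_prop, by
      rw [hasFiniteIntegral_iff_ofReal (Eventually.of_forall fun z => (Real.exp_pos _).le)]
      exact hlf x hx⟩
  have hνmap := aux_map P ν hinv'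
  have hm2 : Measurable (fun p : ℝ × ℝ => p.1 + hY p.2) := by fun_prop
  have hMci : ∀ u : ℂ, 0 < u.re → Integrable (fun y => Complex.exp (-(u * hY y))) ν := by
    intro u hu
    refine (hMi u.re hu).mono' (by fun_prop) (Eventually.of_forall fun y => ?_)
    rw [norm_cexp_neg_mul]
  have hνci : ∀ u : ℂ, 0 < u.re → u.re ≤ s →
      Integrable (fun y : ℝ => Complex.exp (-(u * y))) ν ∧
      ∫ y : ℝ, Complex.exp (-(u * y)) ∂ν = lap P u * Mfun ν u := by
    intro u h0 h1
    have hf : (fun p : ℝ × ℝ => Complex.exp (-(u * ((p.1 + hY p.2 : ℝ) : ℂ)))) =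
        fun p => Complex.exp (-(u * p.1)) * Complex.exp (-(u * hY p.2)) := by
      ext p
      rw [← Complex.exp_add]; congr 1; push_cast; ring
    have hPi := cexp_int P s hexp u (by rw [abs_of_pos h0]; exact h1)
    constructor
    · rw [hνmap, integrable_map_measure (by fun_prop) hm2.aemeasurable]
      have := hPi.mul_prod (hMci u h0)
      rw [← hf] at this
      exact this
    · conv_lhs => rw [hνmap]
      rw [integral_map hm2.aemeasurable (by fun_prop), hf]
      exact integral_prod_mul (fun z : ℝ => Complex.exp (-(u * z)))
        (fun y : ℝ => Complex.exp (-(u * hY y)))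
  have hνi : Integrable (fun y => Real.exp (-(s * y))) ν := by
    have := (hνci s (by simpa using hs) (by simp)).1.norm
    simpa [norm_cexp_neg_mul] using this
  constructor
  · intro u
    rw [lintegral_map (by fun_prop) hYm]
    constructor
    · intro h
      by_contra hu
      push Not at hu
      have h1 : ∫⁻ _, 1 ∂ν ≤ ∫⁻ y, ENNReal.ofReal (Real.exp (-u.re * hY y)) ∂ν := by
        refine lintegral_mono fun y => ?_
        rw [ENNReal.one_le_ofReal]
        exact Real.one_le_exp (mul_nonneg (by linarith) (hY_pos y).le)
      rw [lintegral_one, hinfty] at h1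
      exact absurd (h1.trans_lt h) (lt_irrefl _)
    · intro hu
      simpa only [neg_mul] using hlf u.re hu
  · obtain ⟨ρ, hρ, hρs, Z, hZd, hZ⟩ := lap_factor P s hs hexp hi hmeanP a ha hPa
      (lap_RL ζ hζmeas hζnn P hP)
    have hsub : {u : ℂ | |u.re| < ρ} ⊆ {u : ℂ | |u.re| < s} := fun u hu =>
      lt_of_lt_of_le (show |u.re| < ρ from hu) hρs
    obtain ⟨m, hm, c, H, hH, hHeq⟩ := aux_assembly (Mfun ν) (Gfun ν) Z
      (fun x => ∫ y, Real.exp (-(x * hY y)) ∂ν) ρ hρ (M_diff ν hMi)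
      (fun x hx => by
        rw [Mfun, ← integral_complex_ofReal]; push_cast; rfl)
      (fun x hx => integral_nonneg fun y => (Real.exp_pos _).le)
      (fun B r hr => by
        by_contra hcon
        push Not at hcon
        have hall : ∀ R : ℝ, ν (Iic R) ≤ ENNReal.ofReal (Real.exp 1 * B) := by
          intro R
          set x := min (r / 2) (1 / hY R) with hx
          have hR := hY_pos R
          have hx0 : 0 < x := by positivity
          have hxR : x * hY R ≤ 1 := by
            rw [← le_div_iff₀ hR]; exact min_le_right _ _
          have h1 := hcon x hx0 ((min_le_left _ _).trans_lt (by linarith))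
          calc ν (Iic R) = ∫⁻ y, (Iic R).indicator 1 y ∂ν :=
                (lintegral_indicator_one measurableSet_Iic).symm
            _ ≤ ∫⁻ y, ENNReal.ofReal (Real.exp 1 * Real.exp (-(x * hY y))) ∂ν := by
                refine lintegral_mono fun y => ?_
                by_cases hy : y ≤ R
                · rw [indicator_of_mem (by exact hy), Pi.one_apply, ENNReal.one_le_ofReal,
                    ← Real.exp_add]
                  apply Real.one_le_exp
                  have := hY_strictMono.monotone hy
                  nlinarith
                · rw [indicator_of_notMem (by exact hy)]; exact bot_le
            _ = ENNReal.ofReal (∫ y, Real.exp 1 * Real.exp (-(x * hY y)) ∂ν) :=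
                (ofReal_integral_eq_lintegral_ofReal ((hMi x hx0).const_mul _)
                  (Eventually.of_forall fun y => by positivity)).symm
            _ ≤ _ := by
                rw [integral_const_mul]
                gcongr
        have h2 := le_of_tendsto' (tendsto_measure_Iic_atTop ν) hall
        rw [hinfty] at h2
        exact absurd h2 (not_le.2 ENNReal.ofReal_lt_top))
      ((G_diff ν s hs hs2 hνi).mono hsub) (by simp [Gfun]) hZd (fun u hu => (hZ u hu).1)
      (fun u h0 h1 => by
        have h2 := hνci u h0 (by linarith)
        rw [← (hZ u (by rw [abs_of_pos h0]; exact h1)).2, Gfun, integral_sub h2.1 (hMci u h0), h2.2,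
          Mfun]
        ring)
    refine ⟨m, hm, c, ρ, hρ, by linarith, H, hH, fun u hu => ?_⟩
    rw [integral_map hYm.aemeasurable (by fun_prop)]
    exact hHeq u hu
end

section
/- The invariant probability ν_k of the Markov chain X has a cumulative distribution function F_{ν_k}(x) = ν_k((−∞, x]) which is continuously differentiable; in particular ν_k has a continuous density, given by x ↦ ∫_ℝ ζ(x − h_k(y)) ν_k(dy). -/
open MeasureTheory ProbabilityTheory Real Filter Set
open scoped ENNReal

/-- The invariant probability ν_k of the chain X has a C¹ cumulative distribution
function, with continuous density x ↦ ∫ ζ(x - h_k(y)) ν_k(dy). -/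
theorem stmt11
    (ζ : ℝ → ℝ) (hζmeas : Measurable ζ) (hζnn : ∀ x, 0 ≤ ζ x)
    (hζprob : ∫ x, ζ x = 1)
    (hmean : ∫ x, x * ζ x = 0)
    (δ : ℝ) (hδ : 0 < δ) (Cδ : ℝ)
    (htail : ∀ x : ℝ, 0 ≤ x → ∫ y in {y : ℝ | x < |y|}, ζ y ≤ Cδ * Real.exp (-δ * x))
    (θ : ℝ) (hθ0 : 0 < θ) (hθ1 : θ ≤ 1) (Cθ : ℝ)
    (hHolder : ∀ x y : ℝ, |ζ x - ζ y| ≤ Cθ * |x - y| ^ θ)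
    (k : ℝ) (hkpos : 0 < k)
    (ν : Measure ℝ) [IsProbabilityMeasure ν]
    (hinv : ∀ x : ℝ, (ν (Set.Iic x)).toReal = ∫ y, (∫ t in Set.Iic (x - hkfun k y), ζ t) ∂ν) :
    ContDiff ℝ 1 (fun x => (ν (Set.Iic x)).toReal) ∧
      Continuous (fun x => ∫ y, ζ (x - hkfun k y) ∂ν) ∧
      ∀ x : ℝ, HasDerivAt (fun t => (ν (Set.Iic t)).toReal) (∫ y, ζ (x - hkfun k y) ∂ν) x := by
  have hint : Integrable ζ := by
    by_contra h
    rw [integral_undef h] at hζprob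
    exact zero_ne_one hζprob
  have hcont : Continuous ζ := by
    rw [continuous_iff_continuousAt]
    intro x
    rw [ContinuousAt, tendsto_iff_dist_tendsto_zero]
    have h1 : Continuous (fun y : ℝ => Cθ * |y - x| ^ θ) := by
      refine continuous_const.mul (Continuous.rpow_const (by fun_prop) ?_)
      intro y
      exact Or.inr hθ0.le
    have h2 : Tendsto (fun y : ℝ => Cθ * |y - x| ^ θ) (nhds x) (nhds 0) := by
      have := h1.tendsto x
      simpa [Real.zero_rpow hθ0.ne'] using this
    refine squeeze_zero (fun _ => dist_nonneg) (fun y => ?_) h2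
    rw [Real.dist_eq]
    exact hHolder y x
  have hC0 : 0 ≤ Cθ := by
    have := hHolder 1 0
    have h0 := abs_nonneg (ζ 1 - ζ 0)
    norm_num at this
    linarith
  have hbdd : ∀ x, ζ x ≤ 1 + Cθ := by
    intro x
    have h1 : ∫ t in Set.Icc x (x + 1), (ζ x - Cθ) ≤ ∫ t in Set.Icc x (x + 1), ζ t := by
      refine setIntegral_mono_on ?_ hint.integrableOn measurableSet_Icc ?_
      · exact continuous_const.integrableOn_Icc
      · intro t ht
        have h3 := (abs_le.mp (hHolder x t)).2
        have h4 : |x - t| ^ θ ≤ 1 := by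
          refine Real.rpow_le_one (abs_nonneg _) ?_ hθ0.le
          rw [abs_le]
          constructor <;> linarith [ht.1, ht.2]
        nlinarith
    have h2 : ∫ t in Set.Icc x (x + 1), ζ t ≤ ∫ t, ζ t :=
      setIntegral_le_integral hint (Eventually.of_forall hζnn)
    rw [hζprob] at h2
    simp at h1
    linarith
  have hnorm : ∀ x, ‖ζ x‖ ≤ 1 + Cθ := by
    intro x
    rw [Real.norm_eq_abs, abs_of_nonneg (hζnn x)]
    exact hbdd x
  have hhm : Measurable (hkfun k) := by
    unfold hkfun
    fun_prop
  have hFd : ∀ a : ℝ, HasDerivAt (fun a => ∫ t in Set.Iic a, ζ t) (ζ a) a := by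
    intro a
    have h1 : (fun a => ∫ t in Set.Iic a, ζ t)
        = fun a => (∫ t in Set.Iic 0, ζ t) + ∫ t in (0:ℝ)..a, ζ t := by
      funext b
      rw [← intervalIntegral.integral_Iic_sub_Iic hint.integrableOn hint.integrableOn]
      ring
    rw [h1]
    exact (intervalIntegral.integral_hasDerivAt_right hint.intervalIntegrable
      (hcont.stronglyMeasurableAtFilter _ _) hcont.continuousAt).const_add _
  have hFc : Continuous (fun a => ∫ t in Set.Iic a, ζ t) :=
    continuous_iff_continuousAt.mpr fun a => (hFd a).continuousAt
  have hF1 : ∀ a, ‖∫ t in Set.Iic a, ζ t‖ ≤ 1 := by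
    intro a
    rw [Real.norm_eq_abs, abs_of_nonneg (integral_nonneg hζnn), ← hζprob]
    exact setIntegral_le_integral hint (Eventually.of_forall hζnn)
  have hmζ : ∀ x, Measurable (fun y => ζ (x - hkfun k y)) := fun x =>
    hζmeas.comp (measurable_const.sub hhm)
  have hmF : ∀ x, Measurable (fun y => ∫ t in Set.Iic (x - hkfun k y), ζ t) := fun x =>
    hFc.measurable.comp (measurable_const.sub hhm)
  have hder : ∀ x : ℝ, HasDerivAt (fun t => (ν (Set.Iic t)).toReal)
      (∫ y, ζ (x - hkfun k y) ∂ν) x := by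
    intro x
    rw [funext hinv]
    refine (hasDerivAt_integral_of_dominated_loc_of_deriv_le (μ := ν)
      (F := fun x y => ∫ t in Set.Iic (x - hkfun k y), ζ t)
      (F' := fun x y => ζ (x - hkfun k y)) (bound := fun _ => 1 + Cθ)
      (s := Set.univ) Filter.univ_mem ?_ ?_ ?_ ?_ ?_ ?_).2
    · exact Eventually.of_forall fun x => (hmF x).aestronglyMeasurable
    · exact Integrable.of_bound (hmF x).aestronglyMeasurable 1
        (Eventually.of_forall fun y => hF1 _)
    · exact (hmζ x).aestronglyMeasurable
    · exact Eventually.of_forall fun y x _ => hnorm _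
    · exact integrable_const _
    · exact Eventually.of_forall fun y x _ => (hFd (x - hkfun k y)).comp_sub_const x _
  have hc : Continuous (fun x => ∫ y, ζ (x - hkfun k y) ∂ν) := by
    refine continuous_of_dominated (bound := fun _ => 1 + Cθ)
      (fun x => (hmζ x).aestronglyMeasurable)
      (fun x => Eventually.of_forall fun y => hnorm _) (integrable_const _)
      (Eventually.of_forall fun y => hcont.comp (continuous_id.sub continuous_const))
  refine ⟨?_, hc, hder⟩
  rw [contDiff_one_iff_deriv]
  refine ⟨fun x => (hder x).differentiableAt, ?_⟩
  have : deriv (fun x => (ν (Set.Iic x)).toReal) = fun x => ∫ y, ζ (x - hkfun k y) ∂ν :=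
    funext fun x => (hder x).deriv
  rw [this]
  exact hc
end
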